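/- arXiv:2402.00174 — 7 statements merged into one kernel-verified Lean document; each statement's English description precedes it below -/
import Mathlib

section
/- Every Cobounded-algebra A with ⊥ ≠ ⊤ has a unique atom and a unique coatom; specifically, sSup {x ∈ A : x ≠ ⊤} is the unique coatom of A and sInf {x ∈ A : x ≠ ⊥} is the unique atom of A. -/
open scoped Classical

/-- A Cobounded-algebra: a complete distributive lattice in which a supremum equals `⊤`
only if some member of the family equals `⊤`, and an infimum equals `⊥` only if some
member of the family equals `⊥`. -/
structure IsCobounded (α : Type u) [CompleteLattice α] : Prop where
  inf_sup_distrib : ∀ a b c : α, a ⊓ (b ⊔ c) = (a ⊓ b) ⊔ (a ⊓ c)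
  sup_inf_distrib : ∀ a b c : α, a ⊔ (b ⊓ c) = (a ⊔ b) ⊓ (a ⊔ c)
  iSup_eq_top : ∀ {ι : Type u} (f : ι → α), (⨆ i, f i) = ⊤ → ∃ j, f j = ⊤
  iInf_eq_bot : ∀ {ι : Type u} (f : ι → α), (⨅ i, f i) = ⊥ → ∃ j, f j = ⊥

/-- Every nontrivial Cobounded-algebra has a unique atom and a unique coatom:
`sSup {x | x ≠ ⊤}` is the unique coatom and `sInf {x | x ≠ ⊥}` is the unique atom. -/
theorem cobounded_unique_atom_unique_coatom
    {α : Type u} [CompleteLattice α] (hA : IsCobounded α) (hbt : (⊥ : α) ≠ ⊤) :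
    IsCoatom (sSup {x : α | x ≠ ⊤}) ∧
    (∀ c : α, IsCoatom c → c = sSup {x : α | x ≠ ⊤}) ∧
    IsAtom (sInf {x : α | x ≠ ⊥}) ∧
    (∀ a : α, IsAtom a → a = sInf {x : α | x ≠ ⊥}) := by
  have h1 : sSup {x : α | x ≠ ⊤} ≠ ⊤ := by
    intro h
    rw [sSup_eq_iSup'] at h
    obtain ⟨j, hj⟩ := hA.iSup_eq_top _ h
    exact j.2 hj
  have h2 : sInf {x : α | x ≠ ⊥} ≠ ⊥ := by
    intro h
    rw [sInf_eq_iInf'] at h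
    obtain ⟨j, hj⟩ := hA.iInf_eq_bot _ h
    exact j.2 hj
  refine ⟨⟨h1, ?_⟩, ?_, ⟨h2, ?_⟩, ?_⟩
  · intro b hb
    by_contra hne
    exact absurd (le_sSup (show b ∈ {x : α | x ≠ ⊤} from hne)) (not_le_of_gt hb)
  · intro c hc
    have hle : c ≤ sSup {x : α | x ≠ ⊤} := le_sSup hc.1
    by_contra hne
    exact h1 (hc.2 _ (lt_of_le_of_ne hle hne))
  · intro b hb
    by_contra hne
    exact absurd (sInf_le (show b ∈ {x : α | x ≠ ⊥} from hne)) (not_le_of_gt hb)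
  · intro a ha
    have hle : sInf {x : α | x ≠ ⊥} ≤ a := sInf_le ha.1
    by_contra hne
    exact h2 (ha.2 _ (lt_of_le_of_ne hle (Ne.symm hne)))
end

section
/- Let A be a Cobounded-algebra with ⊥ ≠ ⊤ and let D be a designated set of A which is an ultrafilter, i.e., D is maximal among filters of A not containing ⊥. Then A \ D = {⊥}; equivalently, for every a ∈ A, a ∈ D if and only if a ≠ ⊥. -/
open scoped Classical

/-- A designated set: a filter containing `⊤`, not containing `⊥`, upward closed and
closed under binary meets. -/
structure IsDesignated {α : Type u} [CompleteLattice α] (D : Set α) : Prop where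
  top_mem : (⊤ : α) ∈ D
  bot_not_mem : (⊥ : α) ∉ D
  mem_of_le : ∀ x ∈ D, ∀ y : α, x ≤ y → y ∈ D
  inf_mem : ∀ x ∈ D, ∀ y ∈ D, x ⊓ y ∈ D

/-- `D` is an ultrafilter: it is a designated set (a filter avoiding `⊥`) and every
designated set (filter avoiding `⊥`) containing `D` equals `D`. -/
def IsUltraDesignated {α : Type u} [CompleteLattice α] (D : Set α) : Prop :=
  IsDesignated D ∧ ∀ E : Set α, IsDesignated E → D ⊆ E → E = D

/-- In an ultra-designated Cobounded-algebra, the complement of the designated set is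
exactly `{⊥}`; equivalently, `a ∈ D ↔ a ≠ ⊥`. -/
theorem ultraDesignated_compl_eq_bot
    {α : Type u} [CompleteLattice α] (hA : IsCobounded α) (hbt : (⊥ : α) ≠ ⊤)
    {D : Set α} (hD : IsUltraDesignated D) :
    {a : α | a ∉ D} = {⊥} ∧ (∀ a : α, a ∈ D ↔ a ≠ ⊥) := by
  have hE : IsDesignated {a : α | a ≠ ⊥} := by
    refine ⟨hbt.symm, fun h => h rfl, ?_, ?_⟩
    · intro x hx y hxy hy
      exact hx (le_bot_iff.mp (hy ▸ hxy))
    · intro x hx y hy hxy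
      obtain ⟨j, hj⟩ := hA.iInf_eq_bot (fun i : ULift.{u} Bool => if i.down = true then x else y) (by
        rw [eq_bot_iff, ← hxy]
        refine le_inf ?_ ?_
        · exact (iInf_le _ (ULift.up true)).trans (by simp)
        · exact (iInf_le _ (ULift.up false)).trans (by simp))
      split_ifs at hj
      · exact hx hj
      · exact hy hj
  have hED : {a : α | a ≠ ⊥} = D := hD.2 _ hE (fun a ha h => hD.1.bot_not_mem (h ▸ ha))
  subst hED
  refine ⟨?_, fun a => Iff.rfl⟩
  ext a
  simp
end

section
/- For any Cobounded-algebra A with ⊥ ≠ ⊤, the map f_A : A → PS3 is a homomorphism with respect to meet, join, and implication: for all a, b ∈ A, f_A(a ⊓ b) = f_A(a) ⊓ f_A(b), f_A(a ⊔ b) = f_A(a) ⊔ f_A(b), and f_A(a ⇒ b) = f_A(a) ⇒ f_A(b). -/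
open scoped Classical

/-- The Cobounded implication: `a ⇒ b = ⊥` if `a ≠ ⊥` and `b = ⊥`, and `⊤` otherwise. -/
noncomputable def cimp {α : Type u} [CompleteLattice α] (a b : α) : α :=
  if a ≠ ⊥ ∧ b = ⊥ then ⊥ else ⊤

/-- The algebra `PS3` is the three-element chain, realized as `Fin 3`
(`0` is `0`, `1` is `½`, `2` is `1`); meet is `min` and join is `max`. -/
abbrev PS3 : Type := Fin 3

/-- Implication on `PS3`: `p ⇒ q = 0` if `p ≠ 0` and `q = 0`, and `1` (i.e. `2 : Fin 3`)
otherwise. -/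
def PS3.imp (p q : PS3) : PS3 := if p ≠ 0 ∧ q = 0 then 0 else 2

/-- The map `f_A : A → PS3` sending `⊤` to `1`, `⊥` to `0` and everything else to `½`. -/
noncomputable def fA {α : Type u} [CompleteLattice α] (a : α) : PS3 :=
  if a = ⊤ then 2 else if a = ⊥ then 0 else 1

/-- For any nontrivial Cobounded-algebra `A`, the map `f_A : A → PS3` is a homomorphism
with respect to meet, join, and implication. -/
theorem fA_hom {α : Type u} [CompleteLattice α] (hA : IsCobounded α)
    (hbt : (⊥ : α) ≠ ⊤) :
    (∀ a b : α, fA (a ⊓ b) = fA a ⊓ fA b) ∧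
    (∀ a b : α, fA (a ⊔ b) = fA a ⊔ fA b) ∧
    (∀ a b : α, fA (cimp a b) = PS3.imp (fA a) (fA b)) := by
  have hs : ∀ a b : α, a ⊔ b = ⊤ ↔ a = ⊤ ∨ b = ⊤ := by
    intro a b
    constructor
    · intro h
      obtain ⟨⟨j⟩, hj⟩ := hA.iSup_eq_top (fun i : ULift Bool => cond i.down a b) (by
        rw [← h, iSup_ulift, iSup_bool_eq]; rfl)
      cases j
      · exact Or.inr hj
      · exact Or.inl hj
    · rintro (rfl | rfl) <;> simp
  have hi : ∀ a b : α, a ⊓ b = ⊥ ↔ a = ⊥ ∨ b = ⊥ := by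
    intro a b
    constructor
    · intro h
      obtain ⟨⟨j⟩, hj⟩ := hA.iInf_eq_bot (fun i : ULift Bool => cond i.down a b) (by
        rw [← h, iInf_ulift, iInf_bool_eq]; rfl)
      cases j
      · exact Or.inr hj
      · exact Or.inl hj
    · rintro (rfl | rfl) <;> simp
  refine ⟨fun a b => ?_, fun a b => ?_, fun a b => ?_⟩
  · simp only [fA, inf_eq_top_iff, hi]
    by_cases h1 : a = ⊤ <;> by_cases h2 : b = ⊤ <;> by_cases h3 : a = ⊥ <;>
      by_cases h4 : b = ⊥ <;> simp [h1, h2, h3, h4, hbt, hbt.symm] <;> first | rfl | simp_all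
  · simp only [fA, sup_eq_bot_iff, hs]
    by_cases h1 : a = ⊤ <;> by_cases h2 : b = ⊤ <;> by_cases h3 : a = ⊥ <;>
      by_cases h4 : b = ⊥ <;> simp [h1, h2, h3, h4, hbt, hbt.symm] <;> first | rfl | simp_all
  · simp only [fA, cimp, PS3.imp]
    by_cases h1 : a = ⊤ <;> by_cases h2 : b = ⊤ <;> by_cases h3 : a = ⊥ <;>
      by_cases h4 : b = ⊥ <;> simp_all
end

section
/- For any Cobounded-algebra A with ⊥ ≠ ⊤ and any family (a_i)_{i ∈ I} of elements of A, f_A(⨅_{i∈I} a_i) = ⨅_{i∈I} f_A(a_i) and f_A(⨆_{i∈I} a_i) = ⨆_{i∈I} f_A(a_i); that is, f_A preserves arbitrary infima and suprema. -/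
open scoped Classical

theorem fA_top_aux {α : Type u} [CompleteLattice α] : fA (⊤ : α) = 2 := by
  simp [fA]

theorem fA_bot_aux {α : Type u} [CompleteLattice α] (hbt : (⊥ : α) ≠ ⊤) :
    fA (⊥ : α) = 0 := by
  simp [fA, hbt]

theorem fA_le_one_aux {α : Type u} [CompleteLattice α] {x : α} (h : x ≠ ⊤) : fA x ≤ 1 := by
  unfold fA
  rw [if_neg h]
  split_ifs <;> decide

theorem one_le_fA_aux {α : Type u} [CompleteLattice α] {x : α} (h : x ≠ ⊥) : 1 ≤ fA x := by
  unfold fA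
  split_ifs <;> decide

theorem fA_mid_aux {α : Type u} [CompleteLattice α] {x : α} (h : x ≠ ⊤) (h' : x ≠ ⊥) :
    fA x = 1 := by
  simp [fA, h, h']

theorem fA_mono_aux {α : Type u} [CompleteLattice α] (hbt : (⊥ : α) ≠ ⊤) {x y : α}
    (h : x ≤ y) : fA x ≤ fA y := by
  by_cases hy : y = ⊤
  · rw [hy, fA_top_aux]
    exact Fin.le_last _
  by_cases hx : x = ⊥
  · rw [hx, fA_bot_aux hbt]
    exact Fin.zero_le _
  have hy' : y ≠ ⊥ := fun e => hx (le_bot_iff.1 (e ▸ h))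
  have hx' : x ≠ ⊤ := fun e => hy (top_le_iff.1 (e ▸ h))
  rw [fA_mid_aux hx' hx, fA_mid_aux hy hy']

/-- For any nontrivial Cobounded-algebra `A`, the map `f_A : A → PS3` preserves
arbitrary infima and suprema of families. -/
theorem fA_preserves_iInf_iSup {α : Type u} [CompleteLattice α] (hA : IsCobounded α)
    (hbt : (⊥ : α) ≠ ⊤) {ι : Type u} (a : ι → α) :
    fA (⨅ i, a i) = ⨅ i, fA (a i) ∧ fA (⨆ i, a i) = ⨆ i, fA (a i) := by
  constructor
  · apply le_antisymm
    · exact le_iInf fun i => fA_mono_aux hbt (iInf_le _ i)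
    · by_cases ht : (⨅ i, a i) = ⊤
      · rw [ht, fA_top_aux]
        exact Fin.le_last _
      by_cases hb : (⨅ i, a i) = ⊥
      · obtain ⟨j, hj⟩ := hA.iInf_eq_bot a hb
        rw [hb, ← hj]
        exact iInf_le (fun i => fA (a i)) j
      · rw [fA_mid_aux ht hb]
        obtain ⟨j, hj⟩ : ∃ j, a j ≠ ⊤ := by
          by_contra hc
          push Not at hc
          exact ht (iInf_eq_top.2 hc)
        exact (iInf_le (fun i => fA (a i)) j).trans (fA_le_one_aux hj)
  · apply le_antisymm
    · by_cases hb : (⨆ i, a i) = ⊥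
      · rw [hb, fA_bot_aux hbt]
        exact Fin.zero_le _
      by_cases ht : (⨆ i, a i) = ⊤
      · obtain ⟨j, hj⟩ := hA.iSup_eq_top a ht
        rw [ht, ← hj]
        exact le_iSup (fun i => fA (a i)) j
      · rw [fA_mid_aux ht hb]
        obtain ⟨j, hj⟩ : ∃ j, a j ≠ ⊥ := by
          by_contra hc
          push Not at hc
          exact hb (iSup_eq_bot.2 hc)
        exact (one_le_fA_aux hj).trans (le_iSup (fun i => fA (a i)) j)
    · exact iSup_le fun i => fA_mono_aux hbt (le_iSup a i)
end

section
/- Let (A, D) be an ultra-designated Cobounded-algebra with ⊥ ≠ ⊤. Then the map f_A : A → PS3 also preserves the negation: f_A(a*) = (f_A(a))* for every a ∈ A, where the negation on PS3 is given by 1* = 0, (½)* = ½, 0* = 1; moreover, for every a ∈ A, a ∈ D if and only if f_A(a) ∈ {½, 1}. -/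
open scoped Classical

/-- The negation `*` of a designated Cobounded-algebra `(A, D)`: `a* = ⊥` if `a = ⊤`,
`a* = a` if `a ∈ D` and `a ≠ ⊤`, and `a* = ⊤` if `a ∉ D`. -/
noncomputable def dstar {α : Type u} [CompleteLattice α] (D : Set α) (a : α) : α :=
  if a = ⊤ then ⊥ else if a ∈ D then a else ⊤

/-- Negation on `PS3`: `1* = 0`, `(½)* = ½`, `0* = 1`. -/
def PS3.neg (p : PS3) : PS3 := if p = 2 then 0 else if p = 1 then 1 else 2

/-- For an ultra-designated Cobounded-algebra `(A, D)`, the map `f_A` also preserves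
negation, and `a ∈ D` iff `f_A a ∈ {½, 1}`. -/
theorem fA_preserves_star {α : Type u} [CompleteLattice α] (hA : IsCobounded α)
    (hbt : (⊥ : α) ≠ ⊤) {D : Set α} (hD : IsUltraDesignated D) :
    (∀ a : α, fA (dstar D a) = PS3.neg (fA a)) ∧
    (∀ a : α, a ∈ D ↔ fA a ∈ ({1, 2} : Set PS3)) := by
  have key : {x : α | x ≠ ⊥} = D := by
    refine hD.2 _ ⟨hbt.symm, fun h => h rfl, ?_, ?_⟩ ?_
    · intro x hx y hxy hy
      exact hx (le_bot_iff.mp (hy ▸ hxy))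
    · intro x hx y hy h
      obtain ⟨⟨j⟩, hj⟩ := hA.iInf_eq_bot
        (fun i : ULift Bool => if i.down = true then x else y) (by
          refine le_bot_iff.mp (h ▸ le_inf ?_ ?_)
          · exact (iInf_le _ (ULift.up true)).trans (by simp)
          · exact (iInf_le _ (ULift.up false)).trans (by simp))
      cases j
      · exact hy (by simpa using hj)
      · exact hx (by simpa using hj)
    · intro x hx h
      exact hD.1.bot_not_mem (h ▸ hx)
  have mem : ∀ a : α, a ∈ D ↔ a ≠ ⊥ := fun a => by rw [← key]; rfl
  constructor
  · intro a
    by_cases h1 : a = ⊤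
    · simp [fA, dstar, PS3.neg, h1, hbt]
    · by_cases h2 : a = ⊥
      · simp [fA, dstar, PS3.neg, mem, h2, hbt]
      · simp [fA, dstar, PS3.neg, mem, h1, h2]
  · intro a
    rw [mem]
    by_cases h1 : a = ⊤
    · simp [fA, h1, hbt.symm]
    · by_cases h2 : a = ⊥
      · simp [fA, h2, hbt]
      · simp [fA, h1, h2]
end

section
/- Let (A, D) be a designated Cobounded-algebra with ⊥ ≠ ⊤ whose designated set D contains at least two elements, and let c = sSup {x ∈ A : x ≠ ⊤} be the unique coatom of A. Then c ∈ D, c ≠ ⊤, and c* = c; consequently both c and c* belong to D. -/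
open scoped Classical

/-- In a nontrivial designated Cobounded-algebra `(A, D)` whose designated set has at
least two elements, the unique coatom `c = sSup {x | x ≠ ⊤}` satisfies `c ∈ D`,
`c ≠ ⊤` and `c* = c`; consequently both `c` and `c*` belong to `D`. -/
theorem coatom_mem_designated_and_star_fixed
    {α : Type u} [CompleteLattice α] (hA : IsCobounded α) (hbt : (⊥ : α) ≠ ⊤)
    {D : Set α} (hD : IsDesignated D) (htwo : ∃ x ∈ D, ∃ y ∈ D, x ≠ y) :
    sSup {x : α | x ≠ ⊤} ∈ D ∧
    sSup {x : α | x ≠ ⊤} ≠ ⊤ ∧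
    dstar D (sSup {x : α | x ≠ ⊤}) = sSup {x : α | x ≠ ⊤} ∧
    dstar D (sSup {x : α | x ≠ ⊤}) ∈ D := by
  have hne : sSup {x : α | x ≠ ⊤} ≠ ⊤ := by
    intro h
    rw [sSup_eq_iSup'] at h
    obtain ⟨j, hj⟩ := hA.iSup_eq_top _ h
    exact j.2 hj
  have hmem : sSup {x : α | x ≠ ⊤} ∈ D := by
    obtain ⟨x, hx, y, hy, hxy⟩ := htwo
    by_cases hxt : x = ⊤
    · have hyt : y ≠ ⊤ := fun h => hxy (hxt.trans h.symm)
      exact hD.mem_of_le y hy _ (le_sSup hyt)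
    · exact hD.mem_of_le x hx _ (le_sSup hxt)
  have hstar : dstar D (sSup {x : α | x ≠ ⊤}) = sSup {x : α | x ≠ ⊤} := by
    unfold dstar
    rw [if_neg hne, if_pos hmem]
  exact ⟨hmem, hne, hstar, by rw [hstar]; exact hmem⟩
end

section
/- Let B be a complete Boolean algebra and let A be the lattice obtained from B by adjoining a new bottom element and then a new top element (i.e., A = WithTop (WithBot B)). Then A is a complete distributive lattice satisfying both Cobounded-algebra conditions: for every family (a_i) of elements of A, ⨆ a_i = ⊤ implies a_j = ⊤ for some j, and ⨅ a_i = ⊥ implies a_j = ⊥ for some j. Hence A, equipped with the Cobounded implication and the negation determined by any designated set, is a designated Cobounded-algebra. -/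
open scoped Classical

theorem wtwb_top {B : Type u} [CompleteBooleanAlgebra B] {ι : Type u}
    (f : ι → WithTop (WithBot B)) (h : (⨆ i, f i) = ⊤) : ∃ j, f j = ⊤ := by
  by_contra hc
  push Not at hc
  have h2 : (⨆ i, f i) ≤ ((⊤ : WithBot B) : WithTop (WithBot B)) := by
    refine iSup_le fun i => ?_
    obtain ⟨x, hx⟩ := WithTop.ne_top_iff_exists.1 (hc i)
    rw [← hx]
    exact WithTop.coe_le_coe.2 le_top
  rw [h] at h2
  exact absurd (top_le_iff.1 h2) WithTop.coe_ne_top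

theorem wtwb_bot {B : Type u} [CompleteBooleanAlgebra B] {ι : Type u}
    (f : ι → WithTop (WithBot B)) (h : (⨅ i, f i) = ⊥) : ∃ j, f j = ⊥ := by
  by_contra hc
  push Not at hc
  have h2 : (((⊥ : B) : WithBot B) : WithTop (WithBot B)) ≤ (⨅ i, f i) := by
    refine le_iInf fun i => ?_
    have hi := hc i
    generalize f i = x at hi
    induction x with
    | top => exact le_top
    | coe x =>
      induction x with
      | bot => exact absurd rfl hi
      | coe x => exact WithTop.coe_le_coe.2 (WithBot.coe_le_coe.2 bot_le)
  rw [h] at h2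
  have h3 := WithTop.coe_le_coe.1 h2
  exact absurd (le_bot_iff.1 h3) WithBot.coe_ne_bot

/-- Adjoining a new bottom and a new top element to a complete Boolean algebra yields a
complete distributive lattice satisfying both Cobounded-algebra conditions; hence it is
a (designated) Cobounded-algebra. -/
theorem withTop_withBot_boolean_isCobounded
    {B : Type u} [CompleteBooleanAlgebra B] :
    (∀ a b c : WithTop (WithBot B), a ⊓ (b ⊔ c) = (a ⊓ b) ⊔ (a ⊓ c)) ∧
    (∀ a b c : WithTop (WithBot B), a ⊔ (b ⊓ c) = (a ⊔ b) ⊓ (a ⊔ c)) ∧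
    (∀ {ι : Type u} (f : ι → WithTop (WithBot B)), (⨆ i, f i) = ⊤ → ∃ j, f j = ⊤) ∧
    (∀ {ι : Type u} (f : ι → WithTop (WithBot B)), (⨅ i, f i) = ⊥ → ∃ j, f j = ⊥) ∧
    IsCobounded (WithTop (WithBot B)) := by
  have h1 : ∀ a b c : WithTop (WithBot B), a ⊓ (b ⊔ c) = (a ⊓ b) ⊔ (a ⊓ c) :=
    fun a b c => inf_sup_left a b c
  have h2 : ∀ a b c : WithTop (WithBot B), a ⊔ (b ⊓ c) = (a ⊔ b) ⊓ (a ⊔ c) :=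
    fun a b c => sup_inf_left a b c
  exact ⟨h1, h2, wtwb_top, wtwb_bot, ⟨h1, h2, wtwb_top, wtwb_bot⟩⟩
end
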